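/- (Equivalence theorem.) Under the Setup together with the equation-of-state/Euler hypotheses, suppose additionally: Π is C³ and K is C² on O; (C): (∂₁Π)² + (∂₃Π)² ≠ 0 everywhere on O; and O = O₁ ∪ O₂ where O₁, O₂ are open, Ω is constant on O₁, and u ≤ 0 (hence ρ = P = 0) on O₂. Then the Einstein system (36a), (36b), (36c), (36d), (36e), (36f) holds on O if and only if the reduced equations (N.9a), (N.9b), (N.9c), (Ya), (Yb) hold on O. -/

import Mathlib

open Real

/-- Partial derivative in the first coordinate `ϖ`. -/
noncomputable def d1 (f : ℝ × ℝ → ℝ) : ℝ × ℝ → ℝ := fun p => fderiv ℝ f p (1, 0)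

/-- Partial derivative in the second coordinate `z`. -/
noncomputable def d3 (f : ℝ × ℝ → ℝ) : ℝ × ℝ → ℝ := fun p => fderiv ℝ f p (0, 1)

open Topology

/-- `f` is differentiable at `p` with partial derivatives `a`, `b`. -/
def HP (f : ℝ × ℝ → ℝ) (a b : ℝ) (p : ℝ × ℝ) : Prop :=
  HasFDerivAt f (a • ContinuousLinearMap.fst ℝ ℝ ℝ + b • ContinuousLinearMap.snd ℝ ℝ ℝ) p

theorem HP.e1 {f : ℝ × ℝ → ℝ} {a b : ℝ} {p : ℝ × ℝ} (h : HP f a b p) : d1 f p = a := by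
  unfold d1; rw [HasFDerivAt.fderiv h]; simp

theorem HP.e3 {f : ℝ × ℝ → ℝ} {a b : ℝ} {p : ℝ × ℝ} (h : HP f a b p) : d3 f p = b := by
  unfold d3; rw [HasFDerivAt.fderiv h]; simp

theorem HP.of {f : ℝ × ℝ → ℝ} {p : ℝ × ℝ} (h : DifferentiableAt ℝ f p) :
    HP f (d1 f p) (d3 f p) p := by
  unfold HP
  refine HasFDerivAt.congr_fderiv (h.hasFDerivAt) ?_
  ext <;> simp [d1, d3]

theorem HP.congr {f g : ℝ × ℝ → ℝ} {a b : ℝ} {p : ℝ × ℝ} (h : HP f a b p)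
    (e : g =ᶠ[𝓝 p] f) : HP g a b p := HasFDerivAt.congr_of_eventuallyEq h e

theorem HP.cast {f : ℝ × ℝ → ℝ} {a b a' b' : ℝ} {p : ℝ × ℝ} (h : HP f a b p)
    (ha : a' = a) (hb : b' = b) : HP f a' b' p := by subst ha hb; exact h

theorem HP.const (r : ℝ) (p : ℝ × ℝ) : HP (fun _ => r) 0 0 p := by
  unfold HP
  refine HasFDerivAt.congr_fderiv (hasFDerivAt_const r p) ?_
  ext <;> simp

theorem HP.add {f g : ℝ × ℝ → ℝ} {a b a' b' : ℝ} {p : ℝ × ℝ} (h : HP f a b p)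
    (h' : HP g a' b' p) : HP (fun q => f q + g q) (a + a') (b + b') p := by
  unfold HP at *
  refine HasFDerivAt.congr_fderiv (HasFDerivAt.fun_add h h') ?_
  ext <;> simp

theorem HP.sub {f g : ℝ × ℝ → ℝ} {a b a' b' : ℝ} {p : ℝ × ℝ} (h : HP f a b p)
    (h' : HP g a' b' p) : HP (fun q => f q - g q) (a - a') (b - b') p := by
  unfold HP at *
  refine HasFDerivAt.congr_fderiv (HasFDerivAt.fun_sub h h') ?_
  ext <;> simp

theorem HP.mul {f g : ℝ × ℝ → ℝ} {a b a' b' : ℝ} {p : ℝ × ℝ} (h : HP f a b p)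
    (h' : HP g a' b' p) :
    HP (fun q => f q * g q) (a * g p + f p * a') (b * g p + f p * b') p := by
  unfold HP at *
  refine HasFDerivAt.congr_fderiv (HasFDerivAt.fun_mul h h') ?_
  ext <;> simp <;> ring

theorem HP.comp {f : ℝ × ℝ → ℝ} {φ : ℝ → ℝ} {a b s : ℝ} {p : ℝ × ℝ} (h : HP f a b p)
    (h' : HasDerivAt φ s (f p)) :
    HP (fun q => φ (f q)) (s * a) (s * b) p := by
  unfold HP at *
  refine HasFDerivAt.congr_fderiv (HasDerivAt.comp_hasFDerivAt p h' h) ?_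
  ext <;> simp

theorem HP.cmul {f : ℝ × ℝ → ℝ} {a b : ℝ} {p : ℝ × ℝ} (r : ℝ) (h : HP f a b p) :
    HP (fun q => r * f q) (r * a) (r * b) p := by
  refine ((HP.const r p).mul h).cast ?_ ?_ <;> ring

theorem HP.sq {f : ℝ × ℝ → ℝ} {a b : ℝ} {p : ℝ × ℝ} (h : HP f a b p) :
    HP (fun q => f q ^ 2) (2 * f p * a) (2 * f p * b) p := by
  have := (h.mul h)
  simp only [← pow_two] at this
  refine this.cast ?_ ?_ <;> ring

theorem HP.inv {f : ℝ × ℝ → ℝ} {a b : ℝ} {p : ℝ × ℝ} (h : HP f a b p) (h0 : f p ≠ 0) :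
    HP (fun q => (f q)⁻¹) (-a / f p ^ 2) (-b / f p ^ 2) p := by
  refine (h.comp (hasDerivAt_inv h0)).cast ?_ ?_ <;> ring

theorem HP.div {f g : ℝ × ℝ → ℝ} {a b a' b' : ℝ} {p : ℝ × ℝ} (h : HP f a b p)
    (h' : HP g a' b' p) (h0 : g p ≠ 0) :
    HP (fun q => f q / g q) (a / g p - f p * a' / g p ^ 2) (b / g p - f p * b' / g p ^ 2) p := by
  have := h.mul (h'.inv h0)
  simp only [← div_eq_mul_inv] at this
  refine this.cast ?_ ?_ <;> ring

theorem HP.exp {f : ℝ × ℝ → ℝ} {a b : ℝ} {p : ℝ × ℝ} (h : HP f a b p) :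
    HP (fun q => Real.exp (f q)) (Real.exp (f p) * a) (Real.exp (f p) * b) p :=
  h.comp (Real.hasDerivAt_exp _)

theorem cd_d1 {f : ℝ × ℝ → ℝ} {O : Set (ℝ × ℝ)} (hO : IsOpen O) {n m : WithTop ℕ∞}
    (hf : ContDiffOn ℝ n f O) (h : m + 1 ≤ n) : ContDiffOn ℝ m (d1 f) O :=
  (hf.fderiv_of_isOpen hO h).clm_apply contDiffOn_const

theorem cd_d3 {f : ℝ × ℝ → ℝ} {O : Set (ℝ × ℝ)} (hO : IsOpen O) {n m : WithTop ℕ∞}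
    (hf : ContDiffOn ℝ n f O) (h : m + 1 ≤ n) : ContDiffOn ℝ m (d3 f) O :=
  (hf.fderiv_of_isOpen hO h).clm_apply contDiffOn_const

theorem HP.ofCD {f : ℝ × ℝ → ℝ} {O : Set (ℝ × ℝ)} (hO : IsOpen O) {n : WithTop ℕ∞}
    (hf : ContDiffOn ℝ n f O) (h : n ≠ 0) {p : ℝ × ℝ} (hp : p ∈ O) :
    HP f (d1 f p) (d3 f p) p :=
  HP.of ((hf.contDiffAt (hO.mem_nhds hp)).differentiableAt h)

theorem d13_symm {f : ℝ × ℝ → ℝ} {O : Set (ℝ × ℝ)} (hO : IsOpen O)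
    (hf : ContDiffOn ℝ 2 f O) {p : ℝ × ℝ} (hp : p ∈ O) : d3 (d1 f) p = d1 (d3 f) p := by
  have hs : IsSymmSndFDerivAt ℝ f p :=
    (hf.contDiffAt (hO.mem_nhds hp)).isSymmSndFDerivAt (by simp)
  have hd : DifferentiableAt ℝ (fderiv ℝ f) p :=
    ((hf.fderiv_of_isOpen hO (m := 1) (by norm_num [one_add_one_eq_two])).contDiffAt
      (hO.mem_nhds hp)).differentiableAt (by simp)
  have key : ∀ v w : ℝ × ℝ, fderiv ℝ (fun q => fderiv ℝ f q v) p w = fderiv ℝ (fderiv ℝ f) p w v := by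
    intro v w
    rw [fderiv_clm_apply hd (by fun_prop)]
    simp
  unfold d3 d1
  rw [key, key]
  exact hs _ _

theorem eos {c : ℝ} {rf pf : ℝ → ℝ} (hrfc : Continuous rf) (hpfc : Continuous pf)
    (hrf0 : ∀ s ≤ (0:ℝ), rf s = 0) (hpf0 : ∀ s ≤ (0:ℝ), pf s = 0)
    (hpf' : ∀ s > (0:ℝ), HasDerivAt pf (rf s + pf s / c ^ 2) s) (s : ℝ) :
    HasDerivAt pf (rf s + pf s / c ^ 2) s := by
  rcases lt_trichotomy s 0 with h | h | h
  · rw [hrf0 s h.le, hpf0 s h.le]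
    simp only [zero_div, add_zero]
    refine (hasDerivAt_const s (0:ℝ)).congr_of_eventuallyEq ?_
    filter_upwards [Iio_mem_nhds h] with x hx using hpf0 x (le_of_lt hx)
  · subst h
    have hl : HasDerivWithinAt pf (rf 0 + pf 0 / c ^ 2) (Set.Iic 0) 0 := by
      rw [hrf0 0 le_rfl, hpf0 0 le_rfl]
      simp only [zero_div, add_zero]
      exact (hasDerivWithinAt_const (0:ℝ) _ (0:ℝ)).congr (fun x hx => hpf0 x hx) (hpf0 0 le_rfl)
    have hr : HasDerivWithinAt pf (rf 0 + pf 0 / c ^ 2) (Set.Ici 0) 0 := by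
      refine hasDerivWithinAt_Ici_of_tendsto_deriv (s := Set.Ioi 0) ?_ ?_ ?_ ?_
      · intro x hx; exact (hpf' x hx).differentiableAt.differentiableWithinAt
      · exact hpfc.continuousWithinAt
      · exact self_mem_nhdsWithin
      · have hc : Continuous (fun s => rf s + pf s / c ^ 2) := by fun_prop
        refine Filter.Tendsto.congr' ?_ (hc.continuousWithinAt (s := Set.Ioi 0) (x := 0))
        filter_upwards [self_mem_nhdsWithin] with x hx using (hpf' x hx).deriv.symm
    have := hl.union hr
    rw [Set.Iic_union_Ici] at this
    exact hasDerivWithinAt_univ.1 this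
  · exact hpf' s h

theorem hp_f {F : ℝ × ℝ → ℝ} {a b : ℝ} {p : ℝ × ℝ} (hF : HP F a b p) :
    HP (fun q => Real.exp (2 * F q)) (2 * a * Real.exp (2 * F p))
      (2 * b * Real.exp (2 * F p)) p := by
  refine (hF.cmul 2).exp.cast ?_ ?_ <;> ring

theorem hp_g {F : ℝ × ℝ → ℝ} {a b : ℝ} {p : ℝ × ℝ} (hF : HP F a b p) :
    HP (fun q => Real.exp (-(2 * F q))) (-(2 * a * Real.exp (-(2 * F p))))
      (-(2 * b * Real.exp (-(2 * F p)))) p := by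
  have := (hF.cmul (-2)).exp
  simp only [neg_mul] at this
  refine this.cast ?_ ?_ <;> ring

theorem hp_k {F A : ℝ × ℝ → ℝ} {a b a' b' : ℝ} {p : ℝ × ℝ} (hF : HP F a b p)
    (hA : HP A a' b' p) :
    HP (fun q => -Real.exp (2 * F q) * A q) (-Real.exp (2 * F p) * (2 * a * A p + a'))
      (-Real.exp (2 * F p) * (2 * b * A p + b')) p := by
  have := ((hp_f hF).cmul (-1)).mul hA
  simp only [neg_mul, one_mul] at this ⊢
  refine this.cast ?_ ?_ <;> ring

theorem hp_l {F A Q : ℝ × ℝ → ℝ} {a b a' b' a'' b'' : ℝ} {p : ℝ × ℝ} (hF : HP F a b p)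
    (hA : HP A a' b' p) (hQ : HP Q a'' b'' p) :
    HP (fun q => -Real.exp (2 * F q) * (A q) ^ 2 + Real.exp (-(2 * F q)) * (Q q) ^ 2)
      (-Real.exp (2 * F p) * (2 * a * A p ^ 2 + 2 * A p * a')
        + Real.exp (-(2 * F p)) * (-2 * a * Q p ^ 2 + 2 * Q p * a''))
      (-Real.exp (2 * F p) * (2 * b * A p ^ 2 + 2 * A p * b')
        + Real.exp (-(2 * F p)) * (-2 * b * Q p ^ 2 + 2 * Q p * b'')) p := by
  have := (((hp_f hF).cmul (-1)).mul hA.sq).add ((hp_g hF).mul hQ.sq)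
  simp only [neg_mul, one_mul] at this ⊢
  refine this.cast ?_ ?_ <;> ring

theorem divg {O : Set (ℝ × ℝ)} (hO : IsOpen O) {g Q g1 g3 : ℝ × ℝ → ℝ}
    (h1 : ∀ q ∈ O, d1 g q = g1 q) (h3 : ∀ q ∈ O, d3 g q = g3 q) {p : ℝ × ℝ} (hp : p ∈ O)
    {a b a' b' Q1 Q3 : ℝ} (hg1 : HP g1 a b p) (hg3 : HP g3 a' b' p) (hQ : HP Q Q1 Q3 p)
    (h0 : Q p ≠ 0) :
    d1 (fun q => d1 g q / Q q) p + d3 (fun q => d3 g q / Q q) p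
      = (a + b') / Q p - (g1 p * Q1 + g3 p * Q3) / Q p ^ 2 := by
  have e1 : (fun q => d1 g q / Q q) =ᶠ[𝓝 p] (fun q => g1 q / Q q) := by
    filter_upwards [hO.mem_nhds hp] with q hq
    rw [h1 q hq]
  have e3 : (fun q => d3 g q / Q q) =ᶠ[𝓝 p] (fun q => g3 q / Q q) := by
    filter_upwards [hO.mem_nhds hp] with q hq
    rw [h3 q hq]
  rw [((hg1.div hQ h0).congr e1).e1, ((hg3.div hQ h0).congr e3).e3]
  ring

theorem lap_f {O : Set (ℝ × ℝ)} (hO : IsOpen O) {F Q : ℝ × ℝ → ℝ}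
    (hF : ContDiffOn ℝ 2 F O) {p : ℝ × ℝ} (hp : p ∈ O)
    (hQ : HP Q (d1 Q p) (d3 Q p) p) (h0 : Q p ≠ 0) :
    d1 (fun q => d1 (fun q => Real.exp (2 * F q)) q / Q q) p
      + d3 (fun q => d3 (fun q => Real.exp (2 * F q)) q / Q q) p
      = 2 * Real.exp (2 * F p) / Q p * (d1 (d1 F) p + d3 (d3 F) p
        + 2 * (d1 F p ^ 2 + d3 F p ^ 2) - (d1 F p * d1 Q p + d3 F p * d3 Q p) / Q p) := by
  have hFp : ∀ q ∈ O, HP F (d1 F q) (d3 F q) q := fun q hq => HP.ofCD hO hF (by simp) hq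
  have hF1 : HP (d1 F) _ _ p :=
    HP.ofCD hO (cd_d1 hO hF (m := 1) (by norm_num [one_add_one_eq_two])) (by simp) hp
  have hF3 : HP (d3 F) _ _ p :=
    HP.ofCD hO (cd_d3 hO hF (m := 1) (by norm_num [one_add_one_eq_two])) (by simp) hp
  rw [divg hO (fun q hq => (hp_f (hFp q hq)).e1) (fun q hq => (hp_f (hFp q hq)).e3) hp
    ((hF1.cmul 2).mul (hp_f (hFp p hp))) ((hF3.cmul 2).mul (hp_f (hFp p hp))) hQ h0]
  ring

theorem lap_k {O : Set (ℝ × ℝ)} (hO : IsOpen O) {F A Q : ℝ × ℝ → ℝ}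
    (hF : ContDiffOn ℝ 2 F O) (hA : ContDiffOn ℝ 2 A O) {p : ℝ × ℝ} (hp : p ∈ O)
    (hQ : HP Q (d1 Q p) (d3 Q p) p) (h0 : Q p ≠ 0) :
    d1 (fun q => d1 (fun q => -Real.exp (2 * F q) * A q) q / Q q) p
      + d3 (fun q => d3 (fun q => -Real.exp (2 * F q) * A q) q / Q q) p
      = -Real.exp (2 * F p) / Q p * (2 * (d1 (d1 F) p + d3 (d3 F) p) * A p
        + (d1 (d1 A) p + d3 (d3 A) p) + 4 * (d1 F p * d1 A p + d3 F p * d3 A p)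
        + 4 * A p * (d1 F p ^ 2 + d3 F p ^ 2)
        - (2 * A p * (d1 F p * d1 Q p + d3 F p * d3 Q p)
          + (d1 A p * d1 Q p + d3 A p * d3 Q p)) / Q p) := by
  have hFp : ∀ q ∈ O, HP F (d1 F q) (d3 F q) q := fun q hq => HP.ofCD hO hF (by simp) hq
  have hAp : ∀ q ∈ O, HP A (d1 A q) (d3 A q) q := fun q hq => HP.ofCD hO hA (by simp) hq
  have hF1 : HP (d1 F) _ _ p :=
    HP.ofCD hO (cd_d1 hO hF (m := 1) (by norm_num [one_add_one_eq_two])) (by simp) hp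
  have hF3 : HP (d3 F) _ _ p :=
    HP.ofCD hO (cd_d3 hO hF (m := 1) (by norm_num [one_add_one_eq_two])) (by simp) hp
  have hA1 : HP (d1 A) _ _ p :=
    HP.ofCD hO (cd_d1 hO hA (m := 1) (by norm_num [one_add_one_eq_two])) (by simp) hp
  have hA3 : HP (d3 A) _ _ p :=
    HP.ofCD hO (cd_d3 hO hA (m := 1) (by norm_num [one_add_one_eq_two])) (by simp) hp
  have q1 := hp_k (hFp p hp) (((hF1.cmul 2).mul (hAp p hp)).add hA1)
  have q3 := hp_k (hFp p hp) (((hF3.cmul 2).mul (hAp p hp)).add hA3)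
  rw [divg hO (fun q hq => (hp_k (hFp q hq) (hAp q hq)).e1)
    (fun q hq => (hp_k (hFp q hq) (hAp q hq)).e3) hp q1 q3 hQ h0]
  ring

theorem lap_l {O : Set (ℝ × ℝ)} (hO : IsOpen O) {F A Q : ℝ × ℝ → ℝ}
    (hF : ContDiffOn ℝ 2 F O) (hA : ContDiffOn ℝ 2 A O) (hQ : ContDiffOn ℝ 2 Q O)
    {p : ℝ × ℝ} (hp : p ∈ O) (h0 : Q p ≠ 0) :
    d1 (fun q => d1 (fun q => -Real.exp (2 * F q) * (A q) ^ 2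
        + Real.exp (-(2 * F q)) * (Q q) ^ 2) q / Q q) p
      + d3 (fun q => d3 (fun q => -Real.exp (2 * F q) * (A q) ^ 2
        + Real.exp (-(2 * F q)) * (Q q) ^ 2) q / Q q) p
      = (-Real.exp (2 * F p) * (4 * (d1 F p ^ 2 + d3 F p ^ 2) * A p ^ 2
          + 8 * A p * (d1 F p * d1 A p + d3 F p * d3 A p)
          + 2 * (d1 (d1 F) p + d3 (d3 F) p) * A p ^ 2 + 2 * (d1 A p ^ 2 + d3 A p ^ 2)
          + 2 * A p * (d1 (d1 A) p + d3 (d3 A) p))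
        + Real.exp (-(2 * F p)) * (4 * (d1 F p ^ 2 + d3 F p ^ 2) * Q p ^ 2
          - 8 * Q p * (d1 F p * d1 Q p + d3 F p * d3 Q p)
          - 2 * (d1 (d1 F) p + d3 (d3 F) p) * Q p ^ 2 + 2 * (d1 Q p ^ 2 + d3 Q p ^ 2)
          + 2 * Q p * (d1 (d1 Q) p + d3 (d3 Q) p))) / Q p
        - (-Real.exp (2 * F p) * (2 * A p ^ 2 * (d1 F p * d1 Q p + d3 F p * d3 Q p)
            + 2 * A p * (d1 A p * d1 Q p + d3 A p * d3 Q p))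
          + Real.exp (-(2 * F p)) * (-2 * Q p ^ 2 * (d1 F p * d1 Q p + d3 F p * d3 Q p)
            + 2 * Q p * (d1 Q p ^ 2 + d3 Q p ^ 2))) / Q p ^ 2 := by
  have hFp : ∀ q ∈ O, HP F (d1 F q) (d3 F q) q := fun q hq => HP.ofCD hO hF (by simp) hq
  have hAp : ∀ q ∈ O, HP A (d1 A q) (d3 A q) q := fun q hq => HP.ofCD hO hA (by simp) hq
  have hQp : ∀ q ∈ O, HP Q (d1 Q q) (d3 Q q) q := fun q hq => HP.ofCD hO hQ (by simp) hq
  have hF1 : HP (d1 F) _ _ p :=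
    HP.ofCD hO (cd_d1 hO hF (m := 1) (by norm_num [one_add_one_eq_two])) (by simp) hp
  have hF3 : HP (d3 F) _ _ p :=
    HP.ofCD hO (cd_d3 hO hF (m := 1) (by norm_num [one_add_one_eq_two])) (by simp) hp
  have hA1 : HP (d1 A) _ _ p :=
    HP.ofCD hO (cd_d1 hO hA (m := 1) (by norm_num [one_add_one_eq_two])) (by simp) hp
  have hA3 : HP (d3 A) _ _ p :=
    HP.ofCD hO (cd_d3 hO hA (m := 1) (by norm_num [one_add_one_eq_two])) (by simp) hp
  have hQ1 : HP (d1 Q) _ _ p :=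
    HP.ofCD hO (cd_d1 hO hQ (m := 1) (by norm_num [one_add_one_eq_two])) (by simp) hp
  have hQ3 : HP (d3 Q) _ _ p :=
    HP.ofCD hO (cd_d3 hO hQ (m := 1) (by norm_num [one_add_one_eq_two])) (by simp) hp
  have hF0 := hFp p hp
  have hA0 := hAp p hp
  have hQ0 := hQp p hp
  have q1 := (hp_k hF0 (((hF1.cmul 2).mul hA0.sq).add ((hA0.cmul 2).mul hA1))).add
    ((hp_g hF0).mul (((hF1.cmul (-2)).mul hQ0.sq).add ((hQ0.cmul 2).mul hQ1)))
  have q3 := (hp_k hF0 (((hF3.cmul 2).mul hA0.sq).add ((hA0.cmul 2).mul hA3))).add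
    ((hp_g hF0).mul (((hF3.cmul (-2)).mul hQ0.sq).add ((hQ0.cmul 2).mul hQ3)))
  rw [divg hO (fun q hq => (hp_l (hFp q hq) (hAp q hq) (hQp q hq)).e1)
    (fun q hq => (hp_l (hFp q hq) (hAp q hq) (hQp q hq)).e3) hp q1 q3 hQ0 h0]
  ring

/-- scalar form of (36a) against (N.9a) -/
theorem sc_a {x y q a w M κ e P iE LF F1 F3 A1 A3 Q1 Q3 : ℝ} (hx : x ≠ 0) (hq : q ≠ 0)
    (hxy : y = x⁻¹) :
    (2 * x / q * (LF + 2 * (F1 ^ 2 + F3 ^ 2) - (F1 * Q1 + F3 * Q3) / q)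
      + x * (-4 * q ^ 2 * (F1 ^ 2 + F3 ^ 2) + 4 * q * (F1 * Q1 + F3 * Q3)
        + x ^ 2 * (A1 ^ 2 + A3 ^ 2)) / q ^ 3)
      - (2 * M / q) * (κ * ((1/2) * (e + P) * iE
        * ((x - w * (-x * a)) ^ 2 + w ^ 2 * q ^ 2) + P * x))
    = (2 * x / q) * (LF + (1 / q) * (Q1 * F1 + Q3 * F3)
        + (x ^ 2 / (2 * q ^ 2)) * (A1 ^ 2 + A3 ^ 2)
      - (κ / 2) * M * ((e + P) * (x * (1 + w * a) ^ 2 + y * w ^ 2 * q ^ 2) * iE + 2 * P)) := by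
  subst hxy
  field_simp
  ring

theorem sc_b {x y q a w M κ e P iE LF LA F1 F3 A1 A3 Q1 Q3 : ℝ} (hx : x ≠ 0) (hq : q ≠ 0)
    (hxy : y = x⁻¹) :
    (-x / q * (2 * LF * a + LA + 4 * (F1 * A1 + F3 * A3)
        + 4 * a * (F1 ^ 2 + F3 ^ 2)
        - (2 * a * (F1 * Q1 + F3 * Q3) + (A1 * Q1 + A3 * Q3)) / q)
      + (-x * a) * (-4 * q ^ 2 * (F1 ^ 2 + F3 ^ 2) + 4 * q * (F1 * Q1 + F3 * Q3)
        + x ^ 2 * (A1 ^ 2 + A3 ^ 2)) / q ^ 3)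
      + (2 * M / q) * (κ * ((1/2) * (e + P) * iE
        * (-((-x * a) * x) - 2 * w * x * (-x * a ^ 2 + y * q ^ 2)
          + w ^ 2 * (-x * a) * (-x * a ^ 2 + y * q ^ 2)) - P * (-x * a)))
    = -(2 * x * a / q) * (LF + (1 / q) * (Q1 * F1 + Q3 * F3)
        + (x ^ 2 / (2 * q ^ 2)) * (A1 ^ 2 + A3 ^ 2)
      - (κ / 2) * M * ((e + P) * (x * (1 + w * a) ^ 2 + y * w ^ 2 * q ^ 2) * iE + 2 * P))
      - (x / q) * (LA - (1 / q) * (Q1 * A1 + Q3 * A3) + 4 * (F1 * A1 + F3 * A3)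
      - (-(2 * κ) * M * (e + P) * (y * w * q ^ 2 * (1 + w * a)) * iE)) := by
  subst hxy
  field_simp
  ring

theorem sc_c {x y q a w M κ e P iE LF LA LQ F1 F3 A1 A3 Q1 Q3 : ℝ} (hx : x ≠ 0) (hq : q ≠ 0)
    (hxy : y = x⁻¹) :
    ((-x * (4 * (F1 ^ 2 + F3 ^ 2) * a ^ 2 + 8 * a * (F1 * A1 + F3 * A3)
          + 2 * LF * a ^ 2 + 2 * (A1 ^ 2 + A3 ^ 2) + 2 * a * LA)
        + y * (4 * (F1 ^ 2 + F3 ^ 2) * q ^ 2 - 8 * q * (F1 * Q1 + F3 * Q3)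
          - 2 * LF * q ^ 2 + 2 * (Q1 ^ 2 + Q3 ^ 2) + 2 * q * LQ)) / q
        - (-x * (2 * a ^ 2 * (F1 * Q1 + F3 * Q3) + 2 * a * (A1 * Q1 + A3 * Q3))
          + y * (-2 * q ^ 2 * (F1 * Q1 + F3 * Q3)
            + 2 * q * (Q1 ^ 2 + Q3 ^ 2))) / q ^ 2
      + (-x * a ^ 2 + y * q ^ 2) * (-4 * q ^ 2 * (F1 ^ 2 + F3 ^ 2) + 4 * q * (F1 * Q1 + F3 * Q3)
        + x ^ 2 * (A1 ^ 2 + A3 ^ 2)) / q ^ 3)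
      + (2 * M / q) * (κ * ((1/2) * (e + P) * iE
        * (q ^ 2 + ((-x * a) + w * (-x * a ^ 2 + y * q ^ 2)) ^ 2) - P * (-x * a ^ 2 + y * q ^ 2)))
    = -(2 / q * (x * a ^ 2 + y * q ^ 2)) * (LF + (1 / q) * (Q1 * F1 + Q3 * F3)
        + (x ^ 2 / (2 * q ^ 2)) * (A1 ^ 2 + A3 ^ 2)
      - (κ / 2) * M * ((e + P) * (x * (1 + w * a) ^ 2 + y * w ^ 2 * q ^ 2) * iE + 2 * P))
      - (2 * x * a / q) * (LA - (1 / q) * (Q1 * A1 + Q3 * A3) + 4 * (F1 * A1 + F3 * A3)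
      - (-(2 * κ) * M * (e + P) * (y * w * q ^ 2 * (1 + w * a)) * iE))
      + 2 * y * (LQ - 2 * κ * M * P * q) := by
  subst hxy
  field_simp
  ring

theorem sc_d {x y q a w M κ e P E iE LF LA LQ LK F1 F3 A1 A3 Q1 Q3 K1 T1 P1 : ℝ}
    (hq : q ≠ 0)
    (hE : E = x * (1 + w * a) ^ 2 - y * w ^ 2 * q ^ 2) (hEE : iE * E = 1)
    (h9a : LF + (1 / q) * (Q1 * F1 + Q3 * F3) + (x ^ 2 / (2 * q ^ 2)) * (A1 ^ 2 + A3 ^ 2)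
      = (κ / 2) * M * ((e + P) * (x * (1 + w * a) ^ 2 + y * w ^ 2 * q ^ 2) * iE + 2 * P))
    (h9b : LA - (1 / q) * (Q1 * A1 + Q3 * A3) + 4 * (F1 * A1 + F3 * A3)
      = -(2 * κ) * M * (e + P) * (y * w * q ^ 2 * (1 + w * a)) * iE)
    (hxy : x * y = 1)
    (h9c : LQ = 2 * κ * M * P * q)
    (hT : T1 = 2 * κ * M * (2 * (-F1 + K1) * P * q + P1 * q + P * Q1))
    (hP1 : P1 = -(1/2) * (e + P) * iE * (2 * F1 * x * (1 + w * a) ^ 2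
      + 2 * x * (1 + w * a) * w * A1 + 2 * F1 * y * w ^ 2 * q ^ 2 - 2 * y * w ^ 2 * q * Q1))
    (hY : Q1 * LK + LQ * K1 = (1/2) * T1 + Q1 * (F1 ^ 2 - F3 ^ 2) + 2 * q * F1 * LF
      + 2 * Q3 * F1 * F3
      - (x ^ 2 * F1 / q - x ^ 2 * Q1 / (4 * q ^ 2)) * (A1 ^ 2 - A3 ^ 2)
      - x ^ 2 / (2 * q) * A1 * LA
      - (2 * x ^ 2 * F3 / q - x ^ 2 * Q3 / (2 * q ^ 2)) * (A1 * A3)) :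
    Q1 * (4 * LF - 4 * LK - 2 * LQ / q + (-4 * q ^ 2 * (F1 ^ 2 + F3 ^ 2)
      + 4 * q * (F1 * Q1 + F3 * Q3) + x ^ 2 * (A1 ^ 2 + A3 ^ 2)) / q ^ 2
      - 2 * κ * M * (e - P)) = 0 := by
  have h9a' : LF = (κ / 2) * M * ((e + P) * (x * (1 + w * a) ^ 2 + y * w ^ 2 * q ^ 2) * iE + 2 * P)
    - (1 / q) * (Q1 * F1 + Q3 * F3) - (x ^ 2 / (2 * q ^ 2)) * (A1 ^ 2 + A3 ^ 2) := by
    linear_combination h9a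
  have h9b' : LA = -(2 * κ) * M * (e + P) * (y * w * q ^ 2 * (1 + w * a)) * iE
    + (1 / q) * (Q1 * A1 + Q3 * A3) - 4 * (F1 * A1 + F3 * A3) := by linear_combination h9b
  have hx : x ≠ 0 := left_ne_zero_of_mul_eq_one hxy
  have hy : y = x⁻¹ := eq_inv_of_mul_eq_one_right hxy
  have hLK : Q1 * (4 * LF - 4 * LK - 2 * LQ / q + (-4 * q ^ 2 * (F1 ^ 2 + F3 ^ 2)
      + 4 * q * (F1 * Q1 + F3 * Q3) + x ^ 2 * (A1 ^ 2 + A3 ^ 2)) / q ^ 2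
      - 2 * κ * M * (e - P)) = 2 * κ * M * Q1 * (e + P) * (iE * E - 1) := by
    clear h9a h9b hEE hxy
    subst h9a' h9b' hP1 hT h9c hE hy
    linear_combination (norm := skip) -4 * hY
    field_simp
    ring
  rw [hLK, hEE]; ring

theorem euler {c : ℝ} (hc : 0 < c)
    {O : Set (ℝ × ℝ)} (hO : IsOpen O)
    {F A Pt ρ P Ω E : ℝ × ℝ → ℝ}
    (hF : ContDiffOn ℝ 2 F O) (hA : ContDiffOn ℝ 2 A O) (hPt : ContDiffOn ℝ 2 Pt O)
    (hE : E = fun p => exp (2 * F p) * (1 + Ω p * A p / c) ^ 2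
      - exp (-(2 * F p)) * (Ω p ^ 2 / c ^ 2) * (Pt p) ^ 2)
    (hEpos : ∀ p ∈ O, 0 < E p)
    {O₁ O₂ : Set (ℝ × ℝ)} (hO₁ : IsOpen O₁) (hO12 : O = O₁ ∪ O₂)
    (hΩconst : ∃ Ωc : ℝ, ∀ p ∈ O₁, Ω p = Ωc)
    {u : ℝ × ℝ → ℝ} (hu : ContDiffOn ℝ 2 u O)
    (hvac : ∀ p ∈ O₂, u p ≤ 0)
    {rf pf : ℝ → ℝ} (hrfc : Continuous rf) (hpfc : Continuous pf)
    (hrf0 : ∀ s ≤ (0:ℝ), rf s = 0) (hpf0 : ∀ s ≤ (0:ℝ), pf s = 0)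
    (hpf' : ∀ s > (0:ℝ), HasDerivAt pf (rf s + pf s / c ^ 2) s)
    (hρu : ∀ p ∈ O, ρ p = rf (u p)) (hPu : ∀ p ∈ O, P p = pf (u p))
    {G : ℝ × ℝ → ℝ} (hG : G = fun p => Real.log (E p) / 2)
    (hBern : ∀ p ∈ {x ∈ O | 0 < u x}, ∀ q ∈ connectedComponentIn {x ∈ O | 0 < u x} p,
      u q / c ^ 2 + G q = u p / c ^ 2 + G p)
    {p : ℝ × ℝ} (hp : p ∈ O) :
    HP P
      (-(1/2) * (c ^ 2 * ρ p + P p) * (E p)⁻¹ *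
        (2 * d1 F p * exp (2 * F p) * (1 + Ω p / c * A p) ^ 2
          + 2 * exp (2 * F p) * (1 + Ω p / c * A p) * (Ω p / c) * d1 A p
          + 2 * d1 F p * exp (-(2 * F p)) * (Ω p / c) ^ 2 * Pt p ^ 2
          - 2 * exp (-(2 * F p)) * (Ω p / c) ^ 2 * Pt p * d1 Pt p))
      (-(1/2) * (c ^ 2 * ρ p + P p) * (E p)⁻¹ *
        (2 * d3 F p * exp (2 * F p) * (1 + Ω p / c * A p) ^ 2
          + 2 * exp (2 * F p) * (1 + Ω p / c * A p) * (Ω p / c) * d3 A p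
          + 2 * d3 F p * exp (-(2 * F p)) * (Ω p / c) ^ 2 * Pt p ^ 2
          - 2 * exp (-(2 * F p)) * (Ω p / c) ^ 2 * Pt p * d3 Pt p)) p := by
  have hc0 : c ≠ 0 := hc.ne'
  have hPe : P =ᶠ[𝓝 p] fun q => pf (u q) := by
    filter_upwards [hO.mem_nhds hp] with q hq using hPu q hq
  have hpd := eos hrfc hpfc hrf0 hpf0 hpf' (u p)
  by_cases hup : u p ≤ 0
  · have h1 : HP u (d1 u p) (d3 u p) p := HP.ofCD hO hu (by simp) hp
    have h2 := (h1.comp hpd).congr hPe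
    refine h2.cast ?_ ?_ <;> rw [hρu p hp, hPu p hp, hrf0 _ hup, hpf0 _ hup] <;> ring
  · push Not at hup
    obtain ⟨Ωc, hΩc⟩ := hΩconst
    have hp1 : p ∈ O₁ := by
      rw [hO12] at hp
      rcases hp with h | h
      · exact h
      · exact absurd (hvac p h) (not_le.2 hup)
    have hUo : IsOpen {x ∈ O | 0 < u x} := by
      have := hu.continuousOn.isOpen_inter_preimage hO isOpen_Ioi (t := Set.Ioi (0:ℝ))
      exact this
    have hpU : p ∈ {x ∈ O | 0 < u x} := ⟨hp, hup⟩
    have hCo := hUo.connectedComponentIn (x := p)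
    have hpC : p ∈ connectedComponentIn {x ∈ O | 0 < u x} p := mem_connectedComponentIn hpU
    have hF0 : HP F (d1 F p) (d3 F p) p := HP.ofCD hO hF (by simp) hp
    have hA0 : HP A (d1 A p) (d3 A p) p := HP.ofCD hO hA (by simp) hp
    have hQ0 : HP Pt (d1 Pt p) (d3 Pt p) p := HP.ofCD hO hPt (by simp) hp
    have hEp := hEpos p hp
    have hEv : E p = exp (2 * F p) * (1 + Ωc / c * A p) ^ 2
      - (Ωc / c) ^ 2 * (exp (-(2 * F p)) * (Pt p) ^ 2) := by
      rw [hE]; simp only [hΩc p hp1]; ring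
    have hEd := ((hp_f hF0).mul (((HP.const 1 p).add (hA0.cmul (Ωc / c))).sq)).sub
      (((hp_g hF0).mul hQ0.sq).cmul ((Ωc / c) ^ 2))
    have hEd2 : HP E _ _ p := hEd.congr (by
      filter_upwards [hO₁.mem_nhds hp1] with q hq
      rw [hE]; simp only [hΩc q hq]; ring)
    have hlog := hEd2.comp (Real.hasDerivAt_log hEp.ne')
    have hud := ((HP.const (u p + c ^ 2 * G p) p).add (hlog.cmul (-(c ^ 2 / 2)))).congr
      (g := u) (by
        filter_upwards [hCo.mem_nhds hpC] with q hq
        have := hBern p hpU q hq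
        have e2 : G q = Real.log (E q) / 2 := by rw [hG]
        rw [e2] at this
        field_simp at this
        linear_combination this / 2)
    refine ((hud.comp hpd).congr hPe).cast ?_ ?_ <;>
      rw [hρu p hp, hPu p hp, hΩc p hp1] <;> field_simp <;> ring

theorem yder {O : Set (ℝ × ℝ)} (hO : IsOpen O) {F A Pt K : ℝ × ℝ → ℝ}
    (hF : ContDiffOn ℝ 2 F O) (hA : ContDiffOn ℝ 2 A O)
    (hPt : ContDiffOn ℝ 3 Pt O) (hK : ContDiffOn ℝ 2 K O)
    (hPtpos : ∀ p ∈ O, 0 < Pt p)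
    (hYa : ∀ p ∈ O,
      d1 Pt p * d1 K p - d3 Pt p * d3 K p
      = (1/2) * (d1 (d1 Pt) p - d3 (d3 Pt) p)
        + Pt p * ((d1 F p) ^ 2 - (d3 F p) ^ 2)
        - (exp (4 * F p) / (4 * Pt p)) * ((d1 A p) ^ 2 - (d3 A p) ^ 2))
    (hYb : ∀ p ∈ O,
      d3 Pt p * d1 K p + d1 Pt p * d3 K p
      = d1 (d3 Pt) p + 2 * Pt p * d1 F p * d3 F p
        - (exp (4 * F p) / (2 * Pt p)) * (d1 A p * d3 A p))
    {p : ℝ × ℝ} (hp : p ∈ O) :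
    (d1 Pt p * (d1 (d1 K) p + d3 (d3 K) p) + (d1 (d1 Pt) p + d3 (d3 Pt) p) * d1 K p
      = (1/2) * (d1 (d1 (d1 Pt)) p + d1 (d3 (d3 Pt)) p) + d1 Pt p * (d1 F p ^ 2 - d3 F p ^ 2)
      + 2 * Pt p * d1 F p * (d1 (d1 F) p + d3 (d3 F) p)
      + 2 * d3 Pt p * d1 F p * d3 F p
      - (exp (4 * F p) * d1 F p / Pt p - exp (4 * F p) * d1 Pt p / (4 * Pt p ^ 2))
        * (d1 A p ^ 2 - d3 A p ^ 2)
      - exp (4 * F p) / (2 * Pt p) * d1 A p * (d1 (d1 A) p + d3 (d3 A) p)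
      - (2 * exp (4 * F p) * d3 F p / Pt p - exp (4 * F p) * d3 Pt p / (2 * Pt p ^ 2))
        * (d1 A p * d3 A p)) ∧
    (d3 Pt p * (d1 (d1 K) p + d3 (d3 K) p) + (d1 (d1 Pt) p + d3 (d3 Pt) p) * d3 K p
      = (1/2) * (d3 (d1 (d1 Pt)) p + d3 (d3 (d3 Pt)) p) + d3 Pt p * (d3 F p ^ 2 - d1 F p ^ 2)
      + 2 * Pt p * d3 F p * (d1 (d1 F) p + d3 (d3 F) p)
      + 2 * d1 Pt p * d3 F p * d1 F p
      - (exp (4 * F p) * d3 F p / Pt p - exp (4 * F p) * d3 Pt p / (4 * Pt p ^ 2))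
        * (d3 A p ^ 2 - d1 A p ^ 2)
      - exp (4 * F p) / (2 * Pt p) * d3 A p * (d1 (d1 A) p + d3 (d3 A) p)
      - (2 * exp (4 * F p) * d1 F p / Pt p - exp (4 * F p) * d1 Pt p / (2 * Pt p ^ 2))
        * (d3 A p * d1 A p)) := by
  have h0 : Pt p ≠ 0 := (hPtpos p hp).ne'
  have i2 : (1 : WithTop ℕ∞) + 1 ≤ 2 := by norm_num [one_add_one_eq_two]
  have i3 : (2 : WithTop ℕ∞) + 1 ≤ 3 := by norm_num
  have hPt2 : ContDiffOn ℝ 2 Pt O := hPt.of_le (by norm_num)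
  have cQ1 : ContDiffOn ℝ 2 (d1 Pt) O := cd_d1 hO hPt i3
  have cQ3 : ContDiffOn ℝ 2 (d3 Pt) O := cd_d3 hO hPt i3
  have hF0 : HP F (d1 F p) (d3 F p) p := HP.ofCD hO hF (by simp) hp
  have hQ0 : HP Pt (d1 Pt p) (d3 Pt p) p := HP.ofCD hO hPt (by simp) hp
  have hF1 : HP (d1 F) (d1 (d1 F) p) (d1 (d3 F) p) p := by
    rw [← d13_symm hO hF hp]; exact HP.ofCD hO (cd_d1 hO hF i2) (by simp) hp
  have hF3 : HP (d3 F) _ _ p := HP.ofCD hO (cd_d3 hO hF i2) (by simp) hp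
  have hA1 : HP (d1 A) (d1 (d1 A) p) (d1 (d3 A) p) p := by
    rw [← d13_symm hO hA hp]; exact HP.ofCD hO (cd_d1 hO hA i2) (by simp) hp
  have hA3 : HP (d3 A) _ _ p := HP.ofCD hO (cd_d3 hO hA i2) (by simp) hp
  have hK1 : HP (d1 K) (d1 (d1 K) p) (d1 (d3 K) p) p := by
    rw [← d13_symm hO hK hp]; exact HP.ofCD hO (cd_d1 hO hK i2) (by simp) hp
  have hK3 : HP (d3 K) _ _ p := HP.ofCD hO (cd_d3 hO hK i2) (by simp) hp
  have hQ1 : HP (d1 Pt) (d1 (d1 Pt) p) (d1 (d3 Pt) p) p := by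
    rw [← d13_symm hO hPt2 hp]; exact HP.ofCD hO cQ1 (by simp) hp
  have hQ3 : HP (d3 Pt) _ _ p := HP.ofCD hO cQ3 (by simp) hp
  have hQ11 : HP (d1 (d1 Pt)) _ _ p := HP.ofCD hO (cd_d1 hO cQ1 i2) (by simp) hp
  have hQ33 : HP (d3 (d3 Pt)) _ _ p := HP.ofCD hO (cd_d3 hO cQ3 i2) (by simp) hp
  have hQ13 : HP (d1 (d3 Pt)) (d3 (d1 (d1 Pt)) p) (d1 (d3 (d3 Pt)) p) p := by
    have h := HP.ofCD hO (cd_d1 hO cQ3 i2) (by simp) hp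
    refine h.cast ?_ ?_
    · rw [d13_symm hO cQ1 hp]
      unfold d1
      congr 1
      apply Filter.EventuallyEq.fderiv_eq
      filter_upwards [hO.mem_nhds hp] with q hq
      exact d13_symm hO hPt2 hq
    · exact (d13_symm hO cQ3 hp).symm
  have hX := (hF0.cmul 4).exp
  have eYa := (((hQ11.sub hQ33).cmul (1/2)).add (hQ0.mul (hF1.sq.sub hF3.sq))).sub
    ((hX.div (hQ0.cmul 4) (by simp [h0])).mul (hA1.sq.sub hA3.sq))
  have lYa := (hQ1.mul hK1).sub (hQ3.mul hK3)
  have eYb := (hQ13.add (((hQ0.cmul 2).mul hF1).mul hF3)).sub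
    ((hX.div (hQ0.cmul 2) (by simp [h0])).mul (hA1.mul hA3))
  have lYb := (hQ3.mul hK1).add (hQ1.mul hK3)
  have ca := eYa.congr (Filter.eventually_of_mem (hO.mem_nhds hp) hYa)
  have cb := eYb.congr (Filter.eventually_of_mem (hO.mem_nhds hp) hYb)
  have a1 := lYa.e1.symm.trans ca.e1
  have a3 := lYa.e3.symm.trans ca.e3
  have b1 := lYb.e1.symm.trans cb.e1
  have b3 := lYb.e3.symm.trans cb.e3
  constructor
  · linear_combination (norm := skip) a1 + b3
    field_simp
    ring
  · linear_combination (norm := skip) b1 - a3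
    field_simp
    ring

theorem tder {κ : ℝ} {O : Set (ℝ × ℝ)} (hO : IsOpen O) {F Pt K P : ℝ × ℝ → ℝ}
    (hF : ContDiffOn ℝ 2 F O) (hPt : ContDiffOn ℝ 3 Pt O) (hK : ContDiffOn ℝ 2 K O)
    (h9c : ∀ p ∈ O, d1 (d1 Pt) p + d3 (d3 Pt) p = 2 * κ * exp (2 * (-F p + K p)) * P p * Pt p)
    {p : ℝ × ℝ} (hp : p ∈ O) {P1 P3 : ℝ} (hP : HP P P1 P3 p) :
    (d1 (d1 (d1 Pt)) p + d1 (d3 (d3 Pt)) p = 2 * κ * exp (2 * (-F p + K p))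
      * (2 * (-d1 F p + d1 K p) * P p * Pt p + P1 * Pt p + P p * d1 Pt p)) ∧
    (d3 (d1 (d1 Pt)) p + d3 (d3 (d3 Pt)) p = 2 * κ * exp (2 * (-F p + K p))
      * (2 * (-d3 F p + d3 K p) * P p * Pt p + P3 * Pt p + P p * d3 Pt p)) := by
  have i2 : (1 : WithTop ℕ∞) + 1 ≤ 2 := by norm_num [one_add_one_eq_two]
  have i3 : (2 : WithTop ℕ∞) + 1 ≤ 3 := by norm_num
  have cQ1 : ContDiffOn ℝ 2 (d1 Pt) O := cd_d1 hO hPt i3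
  have cQ3 : ContDiffOn ℝ 2 (d3 Pt) O := cd_d3 hO hPt i3
  have hF0 : HP F (d1 F p) (d3 F p) p := HP.ofCD hO hF (by simp) hp
  have hK0 : HP K (d1 K p) (d3 K p) p := HP.ofCD hO hK (by simp) hp
  have hQ0 : HP Pt (d1 Pt p) (d3 Pt p) p := HP.ofCD hO hPt (by simp) hp
  have hQ11 : HP (d1 (d1 Pt)) _ _ p := HP.ofCD hO (cd_d1 hO cQ1 i2) (by simp) hp
  have hQ33 : HP (d3 (d3 Pt)) _ _ p := HP.ofCD hO (cd_d3 hO cQ3 i2) (by simp) hp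
  have l := hQ11.add hQ33
  have nF := hF0.cmul (-1)
  simp only [neg_mul, one_mul] at nF
  have r := ((((nF.add hK0).cmul 2).exp.cmul (2 * κ)).mul hP).mul hQ0
  have cr := r.congr (Filter.eventually_of_mem (hO.mem_nhds hp) h9c)
  constructor
  · rw [l.e1.symm.trans cr.e1]; ring
  · rw [l.e3.symm.trans cr.e3]; ring

theorem lap_m {O : Set (ℝ × ℝ)} (hO : IsOpen O) {F K : ℝ × ℝ → ℝ}
    (hF : ContDiffOn ℝ 2 F O) (hK : ContDiffOn ℝ 2 K O) {p : ℝ × ℝ} (hp : p ∈ O) :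
    d1 (fun q => 2 * (-F q + K q)) p = 2 * (-d1 F p + d1 K p) ∧
    d3 (fun q => 2 * (-F q + K q)) p = 2 * (-d3 F p + d3 K p) ∧
    d1 (d1 (fun q => 2 * (-F q + K q))) p = 2 * (-d1 (d1 F) p + d1 (d1 K) p) ∧
    d3 (d3 (fun q => 2 * (-F q + K q))) p = 2 * (-d3 (d3 F) p + d3 (d3 K) p) := by
  have i2 : (1 : WithTop ℕ∞) + 1 ≤ 2 := by norm_num [one_add_one_eq_two]
  have gen : ∀ {f g : ℝ × ℝ → ℝ} {a b a' b' : ℝ} {q : ℝ × ℝ}, HP f a b q → HP g a' b' q →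
      HP (fun q => 2 * (-f q + g q)) (2 * (-a + a')) (2 * (-b + b')) q := by
    intro f g a b a' b' q h h'
    have := ((h.cmul (-1)).add h').cmul 2
    simp only [neg_mul, one_mul] at this
    exact this
  have h1 : ∀ q ∈ O, HP (fun q => 2 * (-F q + K q)) (2 * (-d1 F q + d1 K q))
      (2 * (-d3 F q + d3 K q)) q := fun q hq =>
    gen (HP.ofCD hO hF (by simp) hq) (HP.ofCD hO hK (by simp) hq)
  refine ⟨(h1 p hp).e1, (h1 p hp).e3, ?_, ?_⟩
  · exact ((gen (HP.ofCD hO (cd_d1 hO hF i2) (by simp) hp)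
      (HP.ofCD hO (cd_d1 hO hK i2) (by simp) hp)).congr
        (Filter.eventually_of_mem (hO.mem_nhds hp) fun q hq => (h1 q hq).e1)).e1
  · exact ((gen (HP.ofCD hO (cd_d3 hO hF i2) (by simp) hp)
      (HP.ofCD hO (cd_d3 hO hK i2) (by simp) hp)).congr
        (Filter.eventually_of_mem (hO.mem_nhds hp) fun q hq => (h1 q hq).e3)).e3

/-- **Theorem 1 of the paper (equivalence).** Under the Setup, the equation-of-state/Euler
hypotheses, `Pt` of class `C³`, condition (C), and `O = O₁ ∪ O₂` with `Ω` constant on the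
open set `O₁` and `u ≤ 0` on the open set `O₂`: the full Einstein system
(36a)–(36f) holds on `O` iff the reduced system (N.9a)(N.9b)(N.9c)(Ya)(Yb) holds on `O`. -/
theorem stmt_4
    (c κ : ℝ) (hc : 0 < c) (hκ : 0 < κ)
    (O : Set (ℝ × ℝ)) (hO : IsOpen O) (hOw : ∀ p ∈ O, 0 < p.1)
    (F A Pt K ρ P Ω : ℝ × ℝ → ℝ)
    (hF : ContDiffOn ℝ 2 F O) (hA : ContDiffOn ℝ 2 A O)
    (hPt : ContDiffOn ℝ 3 Pt O) (hK : ContDiffOn ℝ 2 K O)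
    (hPtpos : ∀ p ∈ O, 0 < Pt p)
    (hρc : ContinuousOn ρ O) (hPc : ContinuousOn P O) (hΩc : ContinuousOn Ω O)
    (hρ0 : ∀ p ∈ O, 0 ≤ ρ p) (hP0 : ∀ p ∈ O, 0 ≤ P p)
    (ε f k m l E Sg : ℝ × ℝ → ℝ)
    (hε : ε = fun p => c ^ 2 * ρ p)
    (hf : f = fun p => exp (2 * F p))
    (hk : k = fun p => -exp (2 * F p) * A p)
    (hm : m = fun p => 2 * (-F p + K p))
    (hl : l = fun p => -exp (2 * F p) * (A p) ^ 2 + exp (-(2 * F p)) * (Pt p) ^ 2)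
    (hE : E = fun p => exp (2 * F p) * (1 + Ω p * A p / c) ^ 2
      - exp (-(2 * F p)) * (Ω p ^ 2 / c ^ 2) * (Pt p) ^ 2)
    (hEpos : ∀ p ∈ O, 0 < E p)
    (hSg : Sg = fun p => d1 f p * d1 l p + d3 f p * d3 l p + (d1 k p) ^ 2 + (d3 k p) ^ 2)
    (hC : ∀ p ∈ O, (d1 Pt p) ^ 2 + (d3 Pt p) ^ 2 ≠ 0)
    (O₁ O₂ : Set (ℝ × ℝ)) (hO₁ : IsOpen O₁) (hO₂ : IsOpen O₂) (hO12 : O = O₁ ∪ O₂)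
    (hΩconst : ∃ Ωc : ℝ, ∀ p ∈ O₁, Ω p = Ωc)
    (u : ℝ × ℝ → ℝ) (hu : ContDiffOn ℝ 2 u O)
    (hvac : ∀ p ∈ O₂, u p ≤ 0)
    (rf pf : ℝ → ℝ) (hrfc : Continuous rf) (hpfc : Continuous pf)
    (hrf0 : ∀ s ≤ (0:ℝ), rf s = 0) (hpf0 : ∀ s ≤ (0:ℝ), pf s = 0)
    (hpf' : ∀ s > (0:ℝ), HasDerivAt pf (rf s + pf s / c ^ 2) s)
    (hρu : ∀ p ∈ O, ρ p = rf (u p)) (hPu : ∀ p ∈ O, P p = pf (u p))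
    (G : ℝ × ℝ → ℝ) (hG : G = fun p => Real.log (E p) / 2)
    (hBern : ∀ p ∈ {x ∈ O | 0 < u x}, ∀ q ∈ connectedComponentIn {x ∈ O | 0 < u x} p,
      u q / c ^ 2 + G q = u p / c ^ 2 + G p)
    (R00 R02 R22 : ℝ × ℝ → ℝ)
    (hR00 : ∀ p ∈ O, (2 * exp (m p) / Pt p) * R00 p =
      d1 (fun q => d1 f q / Pt q) p + d3 (fun q => d3 f q / Pt q) p + f p * Sg p / (Pt p) ^ 3)
    (hR02 : ∀ p ∈ O, -((2 * exp (m p) / Pt p) * R02 p) =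
      d1 (fun q => d1 k q / Pt q) p + d3 (fun q => d3 k q / Pt q) p + k p * Sg p / (Pt p) ^ 3)
    (hR22 : ∀ p ∈ O, -((2 * exp (m p) / Pt p) * R22 p) =
      d1 (fun q => d1 l q / Pt q) p + d3 (fun q => d3 l q / Pt q) p + l p * Sg p / (Pt p) ^ 3)
    (S00 S02 S22 : ℝ × ℝ → ℝ)
    (hS00 : S00 = fun p => (1/2) * (ε p + P p) * (E p)⁻¹
      * ((f p - (Ω p / c) * k p) ^ 2 + (Ω p ^ 2 / c ^ 2) * (Pt p) ^ 2) + P p * f p)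
    (hS02 : S02 = fun p => (1/2) * (ε p + P p) * (E p)⁻¹
      * (-(k p * f p) - 2 * (Ω p / c) * f p * l p + (Ω p ^ 2 / c ^ 2) * k p * l p) - P p * k p)
    (hS22 : S22 = fun p => (1/2) * (ε p + P p) * (E p)⁻¹
      * ((Pt p) ^ 2 + (k p + (Ω p / c) * l p) ^ 2) - P p * l p)
    (R11 R33 R13 : ℝ × ℝ → ℝ)
    (hR11 : ∀ p ∈ O, 2 * R11 p =
      -(d1 (d1 m) p) - d3 (d3 m) p - 2 * d1 (d1 Pt) p / Pt p
        + (1 / Pt p) * (d1 m p * d1 Pt p - d3 m p * d3 Pt p)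
        + (1 / (Pt p) ^ 2) * (d1 f p * d1 l p + (d1 k p) ^ 2))
    (hR33 : ∀ p ∈ O, 2 * R33 p =
      -(d1 (d1 m) p) - d3 (d3 m) p - 2 * d3 (d3 Pt) p / Pt p
        - (1 / Pt p) * (d1 m p * d1 Pt p - d3 m p * d3 Pt p)
        + (1 / (Pt p) ^ 2) * (d3 f p * d3 l p + (d3 k p) ^ 2))
    (hR13 : ∀ p ∈ O, 2 * R13 p =
      -(2 * d1 (d3 Pt) p / Pt p)
        + (1 / Pt p) * (d3 m p * d1 Pt p + d1 m p * d3 Pt p)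
        + (1 / (2 * (Pt p) ^ 2)) * (d1 f p * d3 l p + d1 l p * d3 f p + 2 * d1 k p * d3 k p))
    (S11 : ℝ × ℝ → ℝ)
    (hS11 : S11 = fun p => (exp (m p) / 2) * (ε p - P p)) :
    ((∀ p ∈ O, R00 p = κ * S00 p) ∧
     (∀ p ∈ O, R02 p = κ * S02 p) ∧
     (∀ p ∈ O, R22 p = κ * S22 p) ∧
     (∀ p ∈ O, R11 p = κ * S11 p) ∧
     (∀ p ∈ O, R33 p = κ * S11 p) ∧
     (∀ p ∈ O, R13 p = 0)) ↔
    ((∀ p ∈ O,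
      d1 (d1 F) p + d3 (d3 F) p
        + (1 / Pt p) * (d1 Pt p * d1 F p + d3 Pt p * d3 F p)
        + (exp (4 * F p) / (2 * (Pt p) ^ 2)) * ((d1 A p) ^ 2 + (d3 A p) ^ 2)
      = (κ / 2) * exp (2 * (-F p + K p)) *
          ((ε p + P p) * (exp (2 * F p) * (1 + Ω p * A p / c) ^ 2
            + exp (-(2 * F p)) * (Ω p ^ 2 / c ^ 2) * (Pt p) ^ 2) / E p + 2 * P p)) ∧
     (∀ p ∈ O,
      d1 (d1 A) p + d3 (d3 A) p
        - (1 / Pt p) * (d1 Pt p * d1 A p + d3 Pt p * d3 A p)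
        + 4 * (d1 F p * d1 A p + d3 F p * d3 A p)
      = -(2 * κ) * exp (2 * (-F p + K p)) * (ε p + P p) *
          (exp (-(2 * F p)) * (Ω p / c) * (Pt p) ^ 2 * (1 + Ω p * A p / c)) / E p) ∧
     (∀ p ∈ O,
      d1 (d1 Pt) p + d3 (d3 Pt) p
      = 2 * κ * exp (2 * (-F p + K p)) * P p * Pt p) ∧
     (∀ p ∈ O,
      d1 Pt p * d1 K p - d3 Pt p * d3 K p
      = (1/2) * (d1 (d1 Pt) p - d3 (d3 Pt) p)
        + Pt p * ((d1 F p) ^ 2 - (d3 F p) ^ 2)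
        - (exp (4 * F p) / (4 * Pt p)) * ((d1 A p) ^ 2 - (d3 A p) ^ 2)) ∧
     (∀ p ∈ O,
      d3 Pt p * d1 K p + d1 Pt p * d3 K p
      = d1 (d3 Pt) p + 2 * Pt p * d1 F p * d3 F p
        - (exp (4 * F p) / (2 * Pt p)) * (d1 A p * d3 A p))) := by
  subst hε hf hk hm hl hS00 hS02 hS22 hS11
  have hPt2 : ContDiffOn ℝ 2 Pt O := hPt.of_le (by norm_num)
  have hFp : ∀ q ∈ O, HP F (d1 F q) (d3 F q) q := fun q hq => HP.ofCD hO hF (by simp) hq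
  have hAp : ∀ q ∈ O, HP A (d1 A q) (d3 A q) q := fun q hq => HP.ofCD hO hA (by simp) hq
  have hQp : ∀ q ∈ O, HP Pt (d1 Pt q) (d3 Pt q) q := fun q hq => HP.ofCD hO hPt (by simp) hq
  have hxy : ∀ p, exp (2 * F p) * exp (-(2 * F p)) = 1 := by
    intro p; rw [← Real.exp_add]; simp
  have hy : ∀ p, exp (-(2 * F p)) = (exp (2 * F p))⁻¹ := fun p => Real.exp_neg _
  have h4 : ∀ p, exp (4 * F p) = exp (2 * F p) ^ 2 := by
    intro p; rw [pow_two, ← Real.exp_add]; ring_nf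
  have hSgp : ∀ p ∈ O, Sg p = -4 * Pt p ^ 2 * (d1 F p ^ 2 + d3 F p ^ 2)
      + 4 * Pt p * (d1 F p * d1 Pt p + d3 F p * d3 Pt p)
      + exp (2 * F p) ^ 2 * (d1 A p ^ 2 + d3 A p ^ 2) := by
    intro p hp
    have hl := hp_l (hFp p hp) (hAp p hp) (hQp p hp)
    have hk := hp_k (hFp p hp) (hAp p hp)
    have hf := hp_f (hFp p hp)
    rw [hSg]
    simp only []
    rw [hl.e1, hl.e3, hk.e1, hk.e3, hf.e1, hf.e3]
    linear_combination (-4 * Pt p ^ 2 * (d1 F p ^ 2 + d3 F p ^ 2)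
      + 4 * Pt p * (d1 F p * d1 Pt p + d3 F p * d3 Pt p)) * hxy p
  have ra : ∀ p ∈ O, (2 * exp (2 * (-F p + K p)) / Pt p) * (R00 p - κ * ((1/2) * (c ^ 2 * ρ p + P p) * (E p)⁻¹
      * ((exp (2 * F p) - (Ω p / c) * (-exp (2 * F p) * A p)) ^ 2 + (Ω p ^ 2 / c ^ 2) * (Pt p) ^ 2)
        + P p * exp (2 * F p)))
      = (2 * exp (2 * F p) / Pt p) * ((d1 (d1 F) p + d3 (d3 F) p
        + (1 / Pt p) * (d1 Pt p * d1 F p + d3 Pt p * d3 F p)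
        + (exp (4 * F p) / (2 * (Pt p) ^ 2)) * ((d1 A p) ^ 2 + (d3 A p) ^ 2))
      - ((κ / 2) * exp (2 * (-F p + K p)) *
          ((c ^ 2 * ρ p + P p) * (exp (2 * F p) * (1 + Ω p * A p / c) ^ 2
            + exp (-(2 * F p)) * (Ω p ^ 2 / c ^ 2) * (Pt p) ^ 2) / E p + 2 * P p))) := by
    intro p hp
    have h0 := (hPtpos p hp).ne'
    have h := hR00 p hp
    rw [lap_f hO hF hp (hQp p hp) h0, hSgp p hp] at h
    have s := sc_a (x := exp (2 * F p)) (y := exp (-(2 * F p))) (q := Pt p) (a := A p)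
      (w := Ω p / c) (M := exp (2 * (-F p + K p))) (κ := κ) (e := c ^ 2 * ρ p) (P := P p)
      (iE := (E p)⁻¹) (LF := d1 (d1 F) p + d3 (d3 F) p) (F1 := d1 F p) (F3 := d3 F p)
      (A1 := d1 A p) (A3 := d3 A p) (Q1 := d1 Pt p) (Q3 := d3 Pt p) (Real.exp_pos _).ne' h0 (hy p)
    rw [h4]
    linear_combination s + h
  have rb : ∀ p ∈ O, -(2 * exp (2 * (-F p + K p)) / Pt p) * (R02 p - κ * ((1/2) * (c ^ 2 * ρ p + P p) * (E p)⁻¹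
      * (-((-exp (2 * F p) * A p) * exp (2 * F p)) - 2 * (Ω p / c) * exp (2 * F p)
        * (-exp (2 * F p) * (A p) ^ 2 + exp (-(2 * F p)) * (Pt p) ^ 2)
        + (Ω p ^ 2 / c ^ 2) * (-exp (2 * F p) * A p)
          * (-exp (2 * F p) * (A p) ^ 2 + exp (-(2 * F p)) * (Pt p) ^ 2))
        - P p * (-exp (2 * F p) * A p)))
      = -(2 * exp (2 * F p) * A p / Pt p) * ((d1 (d1 F) p + d3 (d3 F) p
        + (1 / Pt p) * (d1 Pt p * d1 F p + d3 Pt p * d3 F p)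
        + (exp (4 * F p) / (2 * (Pt p) ^ 2)) * ((d1 A p) ^ 2 + (d3 A p) ^ 2))
      - ((κ / 2) * exp (2 * (-F p + K p)) *
          ((c ^ 2 * ρ p + P p) * (exp (2 * F p) * (1 + Ω p * A p / c) ^ 2
            + exp (-(2 * F p)) * (Ω p ^ 2 / c ^ 2) * (Pt p) ^ 2) / E p + 2 * P p)))
      - (exp (2 * F p) / Pt p) * ((d1 (d1 A) p + d3 (d3 A) p
        - (1 / Pt p) * (d1 Pt p * d1 A p + d3 Pt p * d3 A p)
        + 4 * (d1 F p * d1 A p + d3 F p * d3 A p))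
      - (-(2 * κ) * exp (2 * (-F p + K p)) * (c ^ 2 * ρ p + P p) *
          (exp (-(2 * F p)) * (Ω p / c) * (Pt p) ^ 2 * (1 + Ω p * A p / c)) / E p)) := by
    intro p hp
    have h0 := (hPtpos p hp).ne'
    have h := hR02 p hp
    rw [lap_k hO hF hA hp (hQp p hp) h0, hSgp p hp] at h
    have s := sc_b (x := exp (2 * F p)) (y := exp (-(2 * F p))) (q := Pt p) (a := A p)
      (w := Ω p / c) (M := exp (2 * (-F p + K p))) (κ := κ) (e := c ^ 2 * ρ p) (P := P p)
      (iE := (E p)⁻¹) (LF := d1 (d1 F) p + d3 (d3 F) p) (LA := d1 (d1 A) p + d3 (d3 A) p)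
      (F1 := d1 F p) (F3 := d3 F p)
      (A1 := d1 A p) (A3 := d3 A p) (Q1 := d1 Pt p) (Q3 := d3 Pt p) (Real.exp_pos _).ne' h0 (hy p)
    rw [h4]
    linear_combination s + h
  have rc : ∀ p ∈ O, -(2 * exp (2 * (-F p + K p)) / Pt p) * (R22 p - κ * ((1/2) * (c ^ 2 * ρ p + P p) * (E p)⁻¹
      * ((Pt p) ^ 2 + ((-exp (2 * F p) * A p)
        + (Ω p / c) * (-exp (2 * F p) * (A p) ^ 2 + exp (-(2 * F p)) * (Pt p) ^ 2)) ^ 2)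
        - P p * (-exp (2 * F p) * (A p) ^ 2 + exp (-(2 * F p)) * (Pt p) ^ 2)))
      = -(2 / Pt p * (exp (2 * F p) * A p ^ 2 + exp (-(2 * F p)) * Pt p ^ 2))
        * ((d1 (d1 F) p + d3 (d3 F) p
        + (1 / Pt p) * (d1 Pt p * d1 F p + d3 Pt p * d3 F p)
        + (exp (4 * F p) / (2 * (Pt p) ^ 2)) * ((d1 A p) ^ 2 + (d3 A p) ^ 2))
      - ((κ / 2) * exp (2 * (-F p + K p)) *
          ((c ^ 2 * ρ p + P p) * (exp (2 * F p) * (1 + Ω p * A p / c) ^ 2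
            + exp (-(2 * F p)) * (Ω p ^ 2 / c ^ 2) * (Pt p) ^ 2) / E p + 2 * P p)))
      - (2 * exp (2 * F p) * A p / Pt p) * ((d1 (d1 A) p + d3 (d3 A) p
        - (1 / Pt p) * (d1 Pt p * d1 A p + d3 Pt p * d3 A p)
        + 4 * (d1 F p * d1 A p + d3 F p * d3 A p))
      - (-(2 * κ) * exp (2 * (-F p + K p)) * (c ^ 2 * ρ p + P p) *
          (exp (-(2 * F p)) * (Ω p / c) * (Pt p) ^ 2 * (1 + Ω p * A p / c)) / E p))
      + 2 * exp (-(2 * F p)) * ((d1 (d1 Pt) p + d3 (d3 Pt) p)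
        - (2 * κ * exp (2 * (-F p + K p)) * P p * Pt p)) := by
    intro p hp
    have h0 := (hPtpos p hp).ne'
    have h := hR22 p hp
    rw [lap_l hO hF hA hPt2 hp h0, hSgp p hp] at h
    have s := sc_c (x := exp (2 * F p)) (y := exp (-(2 * F p))) (q := Pt p) (a := A p)
      (w := Ω p / c) (M := exp (2 * (-F p + K p))) (κ := κ) (e := c ^ 2 * ρ p) (P := P p)
      (iE := (E p)⁻¹) (LF := d1 (d1 F) p + d3 (d3 F) p) (LA := d1 (d1 A) p + d3 (d3 A) p)
      (LQ := d1 (d1 Pt) p + d3 (d3 Pt) p) (F1 := d1 F p) (F3 := d3 F p)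
      (A1 := d1 A p) (A3 := d3 A p) (Q1 := d1 Pt p) (Q3 := d3 Pt p) (Real.exp_pos _).ne' h0 (hy p)
    rw [h4]
    linear_combination s + h
  have r1133 : ∀ p ∈ O, 2 * R11 p - 2 * R33 p = (4 / Pt p) *
      ((d1 Pt p * d1 K p - d3 Pt p * d3 K p)
      - ((1/2) * (d1 (d1 Pt) p - d3 (d3 Pt) p)
        + Pt p * ((d1 F p) ^ 2 - (d3 F p) ^ 2)
        - (exp (4 * F p) / (4 * Pt p)) * ((d1 A p) ^ 2 - (d3 A p) ^ 2))) := by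
    intro p hp
    have h0 := (hPtpos p hp).ne'
    obtain ⟨m1, m3, m11, m33⟩ := lap_m hO hF hK hp
    have hl := hp_l (hFp p hp) (hAp p hp) (hQp p hp)
    have hk := hp_k (hFp p hp) (hAp p hp)
    have hf := hp_f (hFp p hp)
    rw [hR11 p hp, hR33 p hp, m1, m3, m11, m33, hl.e1, hl.e3, hk.e1, hk.e3, hf.e1, hf.e3, h4, hy]
    have hx := (Real.exp_pos (2 * F p)).ne'
    generalize exp (2 * F p) = x at *
    field_simp
    ring
  have r13 : ∀ p ∈ O, 2 * R13 p = (2 / Pt p) *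
      ((d3 Pt p * d1 K p + d1 Pt p * d3 K p)
      - (d1 (d3 Pt) p + 2 * Pt p * d1 F p * d3 F p
        - (exp (4 * F p) / (2 * Pt p)) * (d1 A p * d3 A p))) := by
    intro p hp
    have h0 := (hPtpos p hp).ne'
    obtain ⟨m1, m3, m11, m33⟩ := lap_m hO hF hK hp
    have hl := hp_l (hFp p hp) (hAp p hp) (hQp p hp)
    have hk := hp_k (hFp p hp) (hAp p hp)
    have hf := hp_f (hFp p hp)
    rw [hR13 p hp, m1, m3, hl.e1, hl.e3, hk.e1, hk.e3, hf.e1, hf.e3, h4, hy]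
    have hx := (Real.exp_pos (2 * F p)).ne'
    generalize exp (2 * F p) = x at *
    field_simp
    ring
  have rsum : ∀ p ∈ O, 2 * R11 p + 2 * R33 p = 4 * (d1 (d1 F) p + d3 (d3 F) p)
      - 4 * (d1 (d1 K) p + d3 (d3 K) p) - 2 * (d1 (d1 Pt) p + d3 (d3 Pt) p) / Pt p
      + (-4 * Pt p ^ 2 * (d1 F p ^ 2 + d3 F p ^ 2)
      + 4 * Pt p * (d1 F p * d1 Pt p + d3 F p * d3 Pt p)
      + exp (2 * F p) ^ 2 * (d1 A p ^ 2 + d3 A p ^ 2)) / Pt p ^ 2 := by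
    intro p hp
    obtain ⟨m1, m3, m11, m33⟩ := lap_m hO hF hK hp
    have hs := hSgp p hp
    rw [hSg] at hs
    rw [hR11 p hp, hR33 p hp, m1, m3, m11, m33, ← hs]
    ring
  constructor
  · rintro ⟨ha, hb, hc', hd, he, hf'⟩
    have na : ∀ p ∈ O, _ := fun p hp => by
      have h := ra p hp
      rw [sub_eq_zero.2 (ha p hp), mul_zero] at h
      exact sub_eq_zero.1 ((mul_eq_zero.1 h.symm).resolve_left
        (div_ne_zero (mul_ne_zero two_ne_zero (Real.exp_pos _).ne') (hPtpos p hp).ne'))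
    have nb : ∀ p ∈ O, _ := fun p hp => by
      have h := rb p hp
      rw [sub_eq_zero.2 (hb p hp), mul_zero, sub_eq_zero.2 (na p hp), mul_zero, zero_sub] at h
      exact sub_eq_zero.1 ((mul_eq_zero.1 (neg_eq_zero.1 h.symm)).resolve_left
        (div_ne_zero (Real.exp_pos _).ne' (hPtpos p hp).ne'))
    refine ⟨na, nb, ?_, ?_, ?_⟩
    · intro p hp
      have h := rc p hp
      rw [sub_eq_zero.2 (hc' p hp), mul_zero, sub_eq_zero.2 (na p hp), mul_zero,
        sub_eq_zero.2 (nb p hp), mul_zero, zero_sub, neg_zero, zero_add] at h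
      exact sub_eq_zero.1 ((mul_eq_zero.1 h.symm).resolve_left
        (mul_ne_zero two_ne_zero (Real.exp_pos _).ne'))
    · intro p hp
      have h := r1133 p hp
      rw [hd p hp, he p hp, sub_self] at h
      exact sub_eq_zero.1 ((mul_eq_zero.1 h.symm).resolve_left
        (div_ne_zero four_ne_zero (hPtpos p hp).ne'))
    · intro p hp
      have h := r13 p hp
      rw [hf' p hp, mul_zero] at h
      exact sub_eq_zero.1 ((mul_eq_zero.1 h.symm).resolve_left
        (div_ne_zero two_ne_zero (hPtpos p hp).ne'))
  · rintro ⟨na, nb, nc, hYa, hYb⟩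
    have hco : ∀ p ∈ O, 2 * exp (2 * (-F p + K p)) / Pt p ≠ 0 := fun p hp =>
      div_ne_zero (mul_ne_zero two_ne_zero (Real.exp_pos _).ne') (hPtpos p hp).ne'
    have diff : ∀ p ∈ O, 2 * R11 p - 2 * R33 p = 0 := fun p hp => by
      rw [r1133 p hp, sub_eq_zero.2 (hYa p hp), mul_zero]
    have sum : ∀ p ∈ O, 2 * R11 p + 2 * R33 p
        = 2 * κ * exp (2 * (-F p + K p)) * (c ^ 2 * ρ p - P p) := by
      intro p hp
      have h0 := (hPtpos p hp).ne'
      have hPd := euler hc hO hF hA hPt2 hE hEpos hO₁ hO12 hΩconst hu hvac hrfc hpfc hrf0 hpf0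
        hpf' hρu hPu hG hBern hp
      obtain ⟨t1, t3⟩ := tder hO hF hPt hK nc hp hPd
      obtain ⟨y1, y3⟩ := yder hO hF hA hPt hK hPtpos hYa hYb hp
      have ea := na p hp
      have eb := nb p hp
      have ec := nc p hp
      rw [h4] at ea y1 y3
      have hEv : E p = exp (2 * F p) * (1 + Ω p / c * A p) ^ 2
          - exp (-(2 * F p)) * (Ω p / c) ^ 2 * Pt p ^ 2 := by
        rw [hE]; ring
      have hEE : (E p)⁻¹ * E p = 1 := inv_mul_cancel₀ (hEpos p hp).ne'
      have z1 := sc_d h0 hEv hEE (ea.trans (by ring)) (eb.trans (by ring)) (hxy p) ec t1 rfl y1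
      have z3 := sc_d (F1 := d3 F p) (F3 := d1 F p) (A1 := d3 A p) (A3 := d1 A p)
        (Q1 := d3 Pt p) (Q3 := d1 Pt p) (LF := d1 (d1 F) p + d3 (d3 F) p)
        (LA := d1 (d1 A) p + d3 (d3 A) p) h0 hEv hEE (Eq.trans (by ring) (ea.trans (by ring)))
        (Eq.trans (by ring) (eb.trans (by ring))) (hxy p) ec t3 rfl y3
      have hs := rsum p hp
      by_cases h1 : d1 Pt p = 0
      · have h3 : d3 Pt p ≠ 0 := by
          intro h3; apply hC p hp; rw [h1, h3]; ring
        have := (mul_eq_zero.1 z3).resolve_left h3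
        rw [hs]; linear_combination this
      · have := (mul_eq_zero.1 z1).resolve_left h1
        rw [hs]; linear_combination this
    refine ⟨?_, ?_, ?_, ?_, ?_, ?_⟩
    · intro p hp
      have h := ra p hp
      rw [sub_eq_zero.2 (na p hp), mul_zero] at h
      exact sub_eq_zero.1 ((mul_eq_zero.1 h).resolve_left (hco p hp))
    · intro p hp
      have h := rb p hp
      rw [sub_eq_zero.2 (na p hp), mul_zero, sub_eq_zero.2 (nb p hp), mul_zero, sub_zero] at h
      exact sub_eq_zero.1 ((mul_eq_zero.1 h).resolve_left (neg_ne_zero.2 (hco p hp)))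
    · intro p hp
      have h := rc p hp
      rw [sub_eq_zero.2 (na p hp), mul_zero, sub_eq_zero.2 (nb p hp), mul_zero,
        sub_eq_zero.2 (nc p hp), mul_zero, sub_zero, add_zero] at h
      exact sub_eq_zero.1 ((mul_eq_zero.1 h).resolve_left (neg_ne_zero.2 (hco p hp)))
    · intro p hp
      linear_combination (sum p hp) / 4 + (diff p hp) / 4
    · intro p hp
      linear_combination (sum p hp) / 4 - (diff p hp) / 4
    · intro p hp
      have h := r13 p hp
      rw [sub_eq_zero.2 (hYb p hp), mul_zero] at h
      linarith
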